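/- arXiv:1111.4298 — 6 statements merged into one kernel-verified Lean document; each statement's English description precedes it below -/
import Mathlib

section
/- Let N ≥ 2, let 0 = x_0 < x_1 < ⋯ < x_N be grid points, let 0 ≤ σ̲ < σ̄, r ≥ 0 and Δt > 0. For every vector σ = (σ_1,…,σ_{N−1}) with σ_i ∈ [σ̲, σ̄] for all interior indices i, the (N+1)×(N+1) matrix I − Δt·A(σ) is invertible and every entry of its inverse is nonnegative (i.e. I − Δt·A(σ) is an M-matrix). -/
/-!
`B = I − Δt·A(σ)` has nonpositive off-diagonal entries and positive row sums: the rows of `A(σ)`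
sum to `-r` (interior) or `0` (boundary). Such a matrix satisfies a discrete minimum principle
(`nonneg_of_mulVec_nonneg`): `B v ≥ 0` forces `v ≥ 0`, as seen in the row where `v` is minimal.
Applied to `±v` this makes `B` injective, hence invertible; applied to the columns of `B⁻¹`, whose
images under `B` are the standard basis vectors, it makes `B⁻¹` entrywise nonnegative.
-/

/-- `α_i(σ) = σ²x_i²/((x_i − x_{i−1})(x_{i+1} − x_{i−1}))`. -/
noncomputable def alphaC (x : ℕ → ℝ) (s : ℝ) (i : ℕ) : ℝ :=
  s ^ 2 * (x i) ^ 2 / ((x i - x (i - 1)) * (x (i + 1) - x (i - 1)))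

/-- `β_i(σ) = σ²x_i²/((x_{i+1} − x_i)(x_{i+1} − x_{i−1}))`. -/
noncomputable def betaC (x : ℕ → ℝ) (s : ℝ) (i : ℕ) : ℝ :=
  s ^ 2 * (x i) ^ 2 / ((x (i + 1) - x i) * (x (i + 1) - x (i - 1)))

/-- The `(N+1)×(N+1)` matrix `A(σ)` of the implicit characteristic finite difference
scheme: zero rows at the boundary indices `0` and `N`, and for each interior row `i`
the only nonzero entries are `A_{i,i-1} = α_i(σ_i)`, `A_{i,i+1} = β_i(σ_i)` and
`A_{i,i} = −(α_i(σ_i)+β_i(σ_i)+r)`. -/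
noncomputable def Amat (N : ℕ) (x : ℕ → ℝ) (r : ℝ) (σ : ℕ → ℝ) :
    Matrix (Fin (N + 1)) (Fin (N + 1)) ℝ :=
  Matrix.of fun i j =>
    if 1 ≤ (i : ℕ) ∧ (i : ℕ) ≤ N - 1 then
      if (j : ℕ) + 1 = (i : ℕ) then alphaC x (σ (i : ℕ)) (i : ℕ)
      else if (j : ℕ) = (i : ℕ) + 1 then betaC x (σ (i : ℕ)) (i : ℕ)
      else if (j : ℕ) = (i : ℕ) then -(alphaC x (σ (i : ℕ)) (i : ℕ) + betaC x (σ (i : ℕ)) (i : ℕ) + r)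
      else 0
    else 0

/-- Discrete minimum principle. At an index `k` minimizing `v`, the sign of the off-diagonal entries
gives `(B v) k ≤ (∑ j, B k j) * v k`, so `v k < 0` would make `(B v) k` negative. -/
lemma nonneg_of_mulVec_nonneg {n : Type*} [Fintype n] (B : Matrix n n ℝ)
    (hoff : ∀ i j, i ≠ j → B i j ≤ 0) (hsum : ∀ i, 0 < ∑ j, B i j)
    (v : n → ℝ) (hv : ∀ i, 0 ≤ (B.mulVec v) i) (i : n) : 0 ≤ v i := by
  have : Nonempty n := ⟨i⟩
  obtain ⟨k, hk⟩ := Finite.exists_min v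
  refine le_trans ?_ (hk i)
  by_contra! hneg
  have h1 : (B.mulVec v) k ≤ ∑ j, B k j * v k := by
    refine Finset.sum_le_sum fun j _ => ?_
    by_cases hjk : k = j
    · subst hjk; exact le_rfl
    · exact mul_le_mul_of_nonpos_left (hk j) (hoff k j hjk)
  rw [← Finset.sum_mul] at h1
  have h2 := mul_neg_of_pos_of_neg (hsum k) hneg
  linarith [hv k]

lemma isUnit_and_inv_nonneg {n : Type*} [Fintype n] [DecidableEq n] (B : Matrix n n ℝ)
    (hoff : ∀ i j, i ≠ j → B i j ≤ 0) (hsum : ∀ i, 0 < ∑ j, B i j) :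
    IsUnit B ∧ ∀ i j, 0 ≤ B⁻¹ i j := by
  have key := nonneg_of_mulVec_nonneg B hoff hsum
  have hU : IsUnit B := by
    rw [← Matrix.mulVec_injective_iff_isUnit]
    intro v w hvw
    have hvw' : B.mulVec v = B.mulVec w := hvw
    funext i
    have h1 := key (v - w) (fun i => by simp [Matrix.mulVec_sub, hvw']) i
    have h2 := key (w - v) (fun i => by simp [Matrix.mulVec_sub, hvw']) i
    simp only [Pi.sub_apply] at h1 h2
    linarith
  refine ⟨hU, fun i j => ?_⟩
  refine key (fun k => B⁻¹ k j) (fun k => ?_) i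
  have h : (B * B⁻¹) k j = (1 : Matrix n n ℝ) k j := by
    rw [Matrix.mul_nonsing_inv B ((Matrix.isUnit_iff_isUnit_det B).1 hU)]
  change 0 ≤ (B * B⁻¹) k j
  rw [h, Matrix.one_apply]
  split_ifs <;> norm_num

lemma Amat_offDiag_nonneg (N : ℕ) (x : ℕ → ℝ) (hxmono : ∀ i < N, x i < x (i + 1))
    (r : ℝ) (σ : ℕ → ℝ) (i j : Fin (N + 1)) (hij : i ≠ j) : 0 ≤ Amat N x r σ i j := by
  have hne : (j : ℕ) ≠ i := fun h => hij (Fin.ext h.symm)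
  simp only [Amat, Matrix.of_apply, if_neg hne]
  split_ifs with h
  all_goals try exact le_rfl
  all_goals
    have h1 := hxmono (i - 1) (by omega)
    have h2 := hxmono i (by omega)
    rw [Nat.sub_add_cancel h.1] at h1
  · exact div_nonneg (by positivity) (mul_nonneg (by linarith) (by linarith))
  · exact div_nonneg (by positivity) (mul_nonneg (by linarith) (by linarith))

lemma Amat_rowSum_nonpos (N : ℕ) (x : ℕ → ℝ) (r : ℝ) (hr : 0 ≤ r) (σ : ℕ → ℝ)
    (i : Fin (N + 1)) : ∑ j, Amat N x r σ i j ≤ 0 := by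
  by_cases h : 1 ≤ (i : ℕ) ∧ (i : ℕ) ≤ N - 1
  · set a := alphaC x (σ i) i
    set b := betaC x (σ i) i
    have hlt := i.2
    let p : Fin (N + 1) := ⟨i - 1, by omega⟩
    let q : Fin (N + 1) := ⟨i + 1, by omega⟩
    -- The three branches are mutually exclusive, so the row is a sum of three indicators.
    have hrow : ∀ j, Amat N x r σ i j =
        (if j = p then a else 0) + (if j = q then b else 0)
          + (if j = i then -(a + b + r) else 0) := by
      intro j
      have e1 : j = p ↔ (j : ℕ) + 1 = i := by
        simp only [p, Fin.ext_iff]; omega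
      have e2 : j = q ↔ (j : ℕ) = i + 1 := by
        simp only [q, Fin.ext_iff]
      simp only [Amat, Matrix.of_apply, if_pos h, e1, e2, Fin.ext_iff]
      split_ifs <;> first | omega | simp [a, b]
    simp only [hrow, Finset.sum_add_distrib, Finset.sum_ite_eq', Finset.mem_univ, if_true]
    linarith
  · simp [Amat, if_neg h]

/-- `I − Δt·A(σ)` is an M-matrix: it is invertible and all entries of its inverse
are nonnegative. -/
theorem Mmatrix_one_sub_dt_A
    (N : ℕ) (hN : 2 ≤ N) (x : ℕ → ℝ) (hx0 : x 0 = 0)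
    (hxmono : ∀ i < N, x i < x (i + 1))
    (σlo σhi r Δt : ℝ) (hσlo : 0 ≤ σlo) (hσ : σlo < σhi) (hr : 0 ≤ r) (hΔt : 0 < Δt)
    (σ : ℕ → ℝ) (hσrange : ∀ i, 1 ≤ i → i ≤ N - 1 → σ i ∈ Set.Icc σlo σhi) :
    IsUnit (1 - Δt • Amat N x r σ) ∧
      ∀ i j, 0 ≤ (1 - Δt • Amat N x r σ)⁻¹ i j := by
  refine isUnit_and_inv_nonneg _ (fun i j hij => ?_) (fun i => ?_)
  · have h := mul_nonneg hΔt.le (Amat_offDiag_nonneg N x hxmono r σ i j hij)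
    simpa [Matrix.one_apply_ne hij] using h
  · have h := mul_nonpos_of_nonneg_of_nonpos hΔt.le (Amat_rowSum_nonpos N x r hr σ i)
    have e : ∑ j, (1 - Δt • Amat N x r σ) i j = 1 - Δt * ∑ j, Amat N x r σ i j := by
      simp [Finset.sum_sub_distrib, Finset.mul_sum, Matrix.one_apply]
    rw [e]
    linarith
end

section
/- (Stability of the implicit characteristic finite difference scheme.) Let C_b ≥ 0 and let U⁰, U¹, …, U^M be vectors in ℝ^{N+1} and Δt_1,…,Δt_M > 0 timesteps such that for each n the following hold: (i) x_i + r x_i Δt_{n+1} ≤ x_{i+1} for every interior i; (ii) the boundary equations u_0^{n+1}(1 + rΔt_{n+1}) = u_0^n and |u_N^{n+1}| ≤ C_b hold; (iii) for each interior index i there exists σ_i ∈ {σ̲, σ̄} such that (1 + Δt_{n+1}(α_i(σ_i)+β_i(σ_i)+r)) u_i^{n+1} = ū_i^n + Δt_{n+1} α_i(σ_i) u_{i−1}^{n+1} + Δt_{n+1} β_i(σ_i) u_{i+1}^{n+1}, where ū_i^n = λ_i u_i^n + (1−λ_i) u_{i+1}^n with λ_i = (x_{i+1} − x_i − r x_i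 Δt_{n+1})/(x_{i+1} − x_i) ∈ [0,1]. Then for every n, max_{0≤i≤N} |u_i^n| ≤ max( max_{0≤i≤N} |u_i^0|, C_b ). -/
/-- The maximum principle at one interior node: `c` is the new value there, `|c|` dominates the
new neighbours `l` and `q`, and `K` dominates the old values `p`, `p'`; `a`, `b`, `d` stand for
`Δt α`, `Δt β`, `Δt r`, and `w` is the interpolation weight. -/
lemma interior_max_le {a b d w p p' l c q K : ℝ} (ha : 0 ≤ a) (hb : 0 ≤ b) (hd : 0 ≤ d)
    (hw0 : 0 ≤ w) (hw1 : w ≤ 1) (hp : |p| ≤ K) (hp' : |p'| ≤ K) (hl : |l| ≤ |c|) (hq : |q| ≤ |c|)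
    (h : (1 + (a + b + d)) * c = w * p + (1 - w) * p' + a * l + b * q) : |c| ≤ K := by
  have h1 : (1 + (a + b + d)) * |c| ≤ w * |p| + (1 - w) * |p'| + a * |l| + b * |q| := by
    have hw1' : 0 ≤ 1 - w := by linarith
    calc (1 + (a + b + d)) * |c| = |(1 + (a + b + d)) * c| := by
          rw [abs_mul, abs_of_nonneg (by positivity : 0 ≤ 1 + (a + b + d))]
      _ = |w * p + (1 - w) * p' + a * l + b * q| := by rw [h]
      _ ≤ |w * p| + |(1 - w) * p'| + |a * l| + |b * q| := by
          refine (abs_add_le _ _).trans (add_le_add_left ((abs_add_le _ _).trans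
            (add_le_add_left (abs_add_le _ _) _)) _)
      _ = w * |p| + (1 - w) * |p'| + a * |l| + b * |q| := by
          rw [abs_mul, abs_mul, abs_mul, abs_mul, abs_of_nonneg hw0, abs_of_nonneg hw1',
            abs_of_nonneg ha, abs_of_nonneg hb]
  have h2 := mul_le_mul_of_nonneg_left hp hw0
  have h3 := mul_le_mul_of_nonneg_left hp' (sub_nonneg.mpr hw1)
  have h4 := mul_le_mul_of_nonneg_left hl ha
  have h5 := mul_le_mul_of_nonneg_left hq hb
  have h6 := mul_nonneg hd (abs_nonneg c)
  linarith

lemma alphaC_nonneg {x : ℕ → ℝ} {i : ℕ} (s : ℝ) (h1 : x (i - 1) < x i) (h2 : x i < x (i + 1)) :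
    0 ≤ alphaC x s i :=
  div_nonneg (by positivity) (mul_nonneg (by linarith) (by linarith))

lemma betaC_nonneg {x : ℕ → ℝ} {i : ℕ} (s : ℝ) (h1 : x (i - 1) < x i) (h2 : x i < x (i + 1)) :
    0 ≤ betaC x s i :=
  div_nonneg (by positivity) (mul_nonneg (by linarith) (by linarith))

/-- Stability of the implicit characteristic finite difference scheme:
`max_{0≤i≤N} |u_i^n| ≤ max(max_{0≤i≤N} |u_i^0|, C_b)` for every time level `n ≤ M`. -/
theorem stability_implicit_characteristic_scheme
    (N M : ℕ) (hN : 2 ≤ N) (x : ℕ → ℝ) (hx0 : x 0 = 0)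
    (hxmono : ∀ i < N, x i < x (i + 1))
    (σlo σhi r C_b : ℝ) (hσlo : 0 ≤ σlo) (hσ : σlo < σhi) (hr : 0 ≤ r) (hCb : 0 ≤ C_b)
    (Δt : ℕ → ℝ) (hΔt : ∀ n, 1 ≤ n → n ≤ M → 0 < Δt n)
    (u : ℕ → ℕ → ℝ)
    -- (i) the characteristic foot stays in the cell: `x_i + r x_i Δt_{n+1} ≤ x_{i+1}`
    (hfoot : ∀ n < M, ∀ i, 1 ≤ i → i ≤ N - 1 → x i + r * x i * Δt (n + 1) ≤ x (i + 1))
    -- (ii) boundary equations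
    (hbd0 : ∀ n < M, u (n + 1) 0 * (1 + r * Δt (n + 1)) = u n 0)
    (hbdN : ∀ n < M, |u (n + 1) N| ≤ C_b)
    -- (iii) interior equations with some `σ_i ∈ {σ̲, σ̄}` and linear interpolation weight
    -- `λ_i = (x_{i+1} − x_i − r x_i Δt_{n+1})/(x_{i+1} − x_i) ∈ [0,1]`
    (hint : ∀ n < M, ∀ i, 1 ≤ i → i ≤ N - 1 →
      (x (i + 1) - x i - r * x i * Δt (n + 1)) / (x (i + 1) - x i) ∈ Set.Icc (0 : ℝ) 1 ∧
      ∃ s ∈ ({σlo, σhi} : Set ℝ),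
        (1 + Δt (n + 1) * (alphaC x s i + betaC x s i + r)) * u (n + 1) i =
          ((x (i + 1) - x i - r * x i * Δt (n + 1)) / (x (i + 1) - x i)) * u n i
            + (1 - (x (i + 1) - x i - r * x i * Δt (n + 1)) / (x (i + 1) - x i)) * u n (i + 1)
            + Δt (n + 1) * alphaC x s i * u (n + 1) (i - 1)
            + Δt (n + 1) * betaC x s i * u (n + 1) (i + 1)) :
    ∀ n ≤ M, ∀ i ≤ N, |u n i| ≤
      max ((Finset.range (N + 1)).sup'
            (Finset.nonempty_range_iff.mpr (Nat.succ_ne_zero N)) fun j => |u 0 j|)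
        C_b := by
  intro n
  induction n with
  | zero =>
    intro _ i hi
    exact le_max_of_le_left (Finset.le_sup' (fun j => |u 0 j|) (Finset.mem_range.mpr (by omega)))
  | succ n ih =>
    intro hn
    have ih := ih (by omega)
    generalize hK : max ((Finset.range (N + 1)).sup'
      (Finset.nonempty_range_iff.mpr (Nat.succ_ne_zero N)) fun j => |u 0 j|) C_b = K at ih ⊢
    have hCK : C_b ≤ K := hK ▸ le_max_right _ _
    have hdt := hΔt (n + 1) (by omega) hn
    have hd : 0 ≤ Δt (n + 1) * r := by positivity
    obtain ⟨k, hk, hmax⟩ := Finset.exists_max_image (Finset.range (N + 1))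
      (fun j => |u (n + 1) j|) ⟨0, by simp⟩
    have hkN : k ≤ N := by simpa [Nat.lt_succ_iff] using hk
    have hmax : ∀ j ≤ N, |u (n + 1) j| ≤ |u (n + 1) k| := fun j hj =>
      hmax j (Finset.mem_range.mpr (by omega))
    suffices hkK : |u (n + 1) k| ≤ K from fun i hi => (hmax i hi).trans hkK
    rcases Nat.eq_zero_or_pos k with rfl | hk0
    · have h0 := ih 0 (Nat.zero_le _)
      rw [← hbd0 n (by omega), abs_mul, abs_of_nonneg (by linarith : 0 ≤ 1 + r * Δt (n + 1))] at h0
      have := mul_nonneg hd (abs_nonneg (u (n + 1) 0))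
      linarith
    · rcases hkN.eq_or_lt with rfl | hlt
      · exact (hbdN n (by omega)).trans hCK
      · obtain ⟨⟨hw0, hw1⟩, s, -, heq⟩ := hint n (by omega) k hk0 (by omega)
        have hx1 : x (k - 1) < x k := by
          simpa [Nat.sub_add_cancel hk0] using hxmono (k - 1) (by omega)
        have hx2 := hxmono k hlt
        refine interior_max_le (mul_nonneg hdt.le (alphaC_nonneg s hx1 hx2))
          (mul_nonneg hdt.le (betaC_nonneg s hx1 hx2)) hd hw0 hw1 (ih k hkN) (ih (k + 1) hlt)
          (hmax (k - 1) (by omega)) (hmax (k + 1) hlt) ?_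
        rw [← heq]
        ring
end

section
/- (Monotonicity of the discrete operator.) For an interior index i and Δt > 0, define G_i(u₋, u₀, u₊, ū) = (u₀ − ū)/Δt − max_{σ∈{σ̲,σ̄}} [ α_i(σ) u₋ + β_i(σ) u₊ − (α_i(σ)+β_i(σ)+r) u₀ ]. Then for every ε ≥ 0 and all real u₋, u₀, u₊, ū: G_i(u₋+ε, u₀, u₊, ū) ≤ G_i(u₋, u₀, u₊, ū), G_i(u₋, u₀, u₊+ε, ū) ≤ G_i(u₋, u₀, u₊, ū), and G_i(u₋, u₀, u₊, ū+ε) = G_i(u₋, u₀, u₊, ū) − ε/Δt ≤ G_i(u₋, u₀, u₊, ū). -/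
/-- The nodal discrete operator
`G_i(u₋, u₀, u₊, ū) = (u₀ − ū)/Δt − max_{σ∈{σ̲,σ̄}} [α_i(σ)u₋ + β_i(σ)u₊ − (α_i(σ)+β_i(σ)+r)u₀]`. -/
noncomputable def Gnode (x : ℕ → ℝ) (σlo σhi r Δt : ℝ) (i : ℕ)
    (um u0 up ub : ℝ) : ℝ :=
  (u0 - ub) / Δt -
    max (alphaC x σlo i * um + betaC x σlo i * up - (alphaC x σlo i + betaC x σlo i + r) * u0)
        (alphaC x σhi i * um + betaC x σhi i * up - (alphaC x σhi i + betaC x σhi i + r) * u0)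

/-- Monotonicity of the discrete operator `G_i`. -/
theorem monotonicity_discrete_operator
    (N : ℕ) (hN : 2 ≤ N) (x : ℕ → ℝ) (hx0 : x 0 = 0)
    (hxmono : ∀ i < N, x i < x (i + 1))
    (σlo σhi r Δt : ℝ) (hσlo : 0 ≤ σlo) (hσ : σlo < σhi) (hr : 0 ≤ r) (hΔt : 0 < Δt)
    (i : ℕ) (hi1 : 1 ≤ i) (hi2 : i ≤ N - 1) :
    ∀ ε ≥ (0 : ℝ), ∀ um u0 up ub : ℝ,
      Gnode x σlo σhi r Δt i (um + ε) u0 up ub ≤ Gnode x σlo σhi r Δt i um u0 up ub ∧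
      Gnode x σlo σhi r Δt i um u0 (up + ε) ub ≤ Gnode x σlo σhi r Δt i um u0 up ub ∧
      Gnode x σlo σhi r Δt i um u0 up (ub + ε)
        = Gnode x σlo σhi r Δt i um u0 up ub - ε / Δt ∧
      Gnode x σlo σhi r Δt i um u0 up (ub + ε) ≤ Gnode x σlo σhi r Δt i um u0 up ub := by
  intro ε hε um u0 up ub
  have h1 : x (i - 1) < x i := by
    have h := hxmono (i - 1) (by omega)
    rwa [Nat.sub_add_cancel hi1] at h
  have h2 : x i < x (i + 1) := hxmono i (by omega)
  have hα : ∀ s, 0 ≤ alphaC x s i := fun s =>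
    div_nonneg (by positivity) (mul_nonneg (by linarith) (by linarith))
  have hβ : ∀ s, 0 ≤ betaC x s i := fun s =>
    div_nonneg (by positivity) (mul_nonneg (by linarith) (by linarith))
  have hdt : 0 ≤ ε / Δt := div_nonneg hε hΔt.le
  have heq : Gnode x σlo σhi r Δt i um u0 up (ub + ε)
      = Gnode x σlo σhi r Δt i um u0 up ub - ε / Δt := by
    unfold Gnode
    ring
  refine ⟨?_, ?_, heq, by linarith⟩
  · unfold Gnode
    have hum : um ≤ um + ε := by linarith
    gcongr
    · exact hα σlo
    · exact hα σhi
  · unfold Gnode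
    have hup : up ≤ up + ε := by linarith
    gcongr
    · exact hβ σlo
    · exact hβ σhi
end

section
/- (Spatial consistency of the central difference discretization on a nonuniform grid.) Let v : ℝ → ℝ be three times continuously differentiable on [x_0, x_N] and let M₃ = sup_{x ∈ [x_0,x_N]} |v'''(x)|. Then for every σ > 0 and every interior index i, | α_i(σ) v(x_{i−1}) + β_i(σ) v(x_{i+1}) − (α_i(σ)+β_i(σ)) v(x_i) − ½ σ² x_i² v''(x_i) | ≤ (σ² x_i² M₃ / 6) · ((x_i − x_{i−1}) + (x_{i+1} − x_i)). In particular the discretization error of the spatial operator ½σ²x²∂_{xx}v − rv by L_h^σ is O(Δx) on a quasi-uniform grid. -/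
/-- Second-order Taylor expansion with cubic remainder, for an arbitrary centre `c` and an arbitrary
evaluation point `y` of the interval on which the derivatives are taken. -/
theorem taylor_two_remainder {a b M : ℝ} (hab : a < b) {v : ℝ → ℝ}
    (hv : ContDiffOn ℝ 3 v (Set.Icc a b))
    (hM : ∀ t ∈ Set.Icc a b, |iteratedDerivWithin 3 v (Set.Icc a b) t| ≤ M)
    {c y : ℝ} (hc : c ∈ Set.Icc a b) (hy : y ∈ Set.Icc a b) :
    |v y - v c - (y - c) * iteratedDerivWithin 1 v (Set.Icc a b) c
        - (y - c) ^ 2 / 2 * iteratedDerivWithin 2 v (Set.Icc a b) c| ≤ M / 6 * |y - c| ^ 3 := by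
  have hu := uniqueDiffOn_Icc hab
  have hv2 : ContDiffOn ℝ (2 : ℕ) v (Set.Icc a b) := hv.of_le (by norm_num)
  have hdiff : DifferentiableOn ℝ (iteratedDerivWithin 2 v (Set.Icc a b)) (Set.Icc a b) :=
    hv.differentiableOn_iteratedDerivWithin (by norm_num) hu
  have hT : ∀ t ∈ Set.Icc a b,
      HasDerivWithinAt (fun t => taylorWithinEval v 2 (Set.Icc a b) t y)
        ((y - t) ^ 2 / 2 * iteratedDerivWithin 3 v (Set.Icc a b) t) (Set.Icc a b) t := by
    intro t ht
    refine (hasDerivWithinAt_taylorWithinEval_at_Icc y hab ht hv2 hdiff).congr_deriv ?_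
    simp only [Nat.factorial, smul_eq_mul]
    push_cast
    ring
  have hcube : ∀ C t : ℝ, HasDerivAt (fun t : ℝ => C / 6 * (y - t) ^ 3)
      (-(C * ((y - t) ^ 2 / 2))) t := by
    intro C t
    refine ((((hasDerivAt_id t).const_sub y).pow 3).const_mul (C / 6)).congr_deriv ?_
    simp only [id]
    push_cast
    ring
  have hG : ∀ C : ℝ, ∀ t ∈ Set.Icc a b,
      HasDerivWithinAt (fun t => taylorWithinEval v 2 (Set.Icc a b) t y + C / 6 * (y - t) ^ 3)
        ((y - t) ^ 2 / 2 * (iteratedDerivWithin 3 v (Set.Icc a b) t - C)) (Set.Icc a b) t :=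
    fun C t ht => ((hT t ht).add (hcube C t).hasDerivWithinAt).congr_deriv (by ring)
  have hanti : AntitoneOn
      (fun t => taylorWithinEval v 2 (Set.Icc a b) t y + M / 6 * (y - t) ^ 3) (Set.Icc a b) := by
    refine antitoneOn_of_hasDerivWithinAt_nonpos (convex_Icc a b)
      (fun t ht => (hG M t ht).continuousWithinAt)
      (fun t ht => (hG M t (interior_subset ht)).mono interior_subset) fun t ht => ?_
    have := (abs_le.mp (hM t (interior_subset ht))).2
    exact mul_nonpos_of_nonneg_of_nonpos (by positivity) (by linarith)
  have hmono : MonotoneOn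
      (fun t => taylorWithinEval v 2 (Set.Icc a b) t y + -M / 6 * (y - t) ^ 3) (Set.Icc a b) := by
    refine monotoneOn_of_hasDerivWithinAt_nonneg (convex_Icc a b)
      (fun t ht => (hG (-M) t ht).continuousWithinAt)
      (fun t ht => (hG (-M) t (interior_subset ht)).mono interior_subset) fun t ht => ?_
    have := (abs_le.mp (hM t (interior_subset ht))).1
    exact mul_nonneg (by positivity) (by linarith)
  have hTc : taylorWithinEval v 2 (Set.Icc a b) c y
      = v c + (y - c) * iteratedDerivWithin 1 v (Set.Icc a b) c
        + (y - c) ^ 2 / 2 * iteratedDerivWithin 2 v (Set.Icc a b) c := by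
    simp only [taylor_within_apply, Finset.sum_range_succ, Finset.sum_range_zero, Nat.factorial,
      smul_eq_mul, iteratedDerivWithin_zero]
    push_cast
    ring
  rcases le_total c y with h | h
  · have h1 := hanti hc hy h
    have h2 := hmono hc hy h
    simp only [taylorWithinEval_self, hTc, sub_self] at h1 h2
    rw [abs_of_nonneg (sub_nonneg.mpr h), abs_le]
    constructor <;> nlinarith
  · have h1 := hanti hy hc h
    have h2 := hmono hy hc h
    simp only [taylorWithinEval_self, hTc, sub_self] at h1 h2
    rw [abs_of_nonpos (sub_nonpos.mpr h), abs_le]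
    constructor <;> nlinarith

/-- Spatial consistency of the central difference discretization on a nonuniform grid:
if `v` is three times continuously differentiable on `[x_0, x_N]` with `|v'''| ≤ M₃` there,
then for every `σ > 0` and interior index `i`,
`|α_i(σ)v(x_{i−1}) + β_i(σ)v(x_{i+1}) − (α_i(σ)+β_i(σ))v(x_i) − ½σ²x_i²v''(x_i)|
  ≤ (σ²x_i²M₃/6)·((x_i − x_{i−1}) + (x_{i+1} − x_i))`. -/
theorem spatial_consistency_central_difference
    (N : ℕ) (hN : 2 ≤ N) (x : ℕ → ℝ) (hx0 : x 0 = 0)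
    (hxmono : ∀ i < N, x i < x (i + 1))
    (v : ℝ → ℝ) (M₃ : ℝ)
    (hv : ContDiffOn ℝ 3 v (Set.Icc (x 0) (x N)))
    (hM : ∀ y ∈ Set.Icc (x 0) (x N),
      |iteratedDerivWithin 3 v (Set.Icc (x 0) (x N)) y| ≤ M₃) :
    ∀ σ : ℝ, 0 < σ → ∀ i, 1 ≤ i → i ≤ N - 1 →
      |alphaC x σ i * v (x (i - 1)) + betaC x σ i * v (x (i + 1))
          - (alphaC x σ i + betaC x σ i) * v (x i)
          - σ ^ 2 * (x i) ^ 2 / 2 * iteratedDerivWithin 2 v (Set.Icc (x 0) (x N)) (x i)|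
        ≤ σ ^ 2 * (x i) ^ 2 * M₃ / 6 * ((x i - x (i - 1)) + (x (i + 1) - x i)) := by
  intro σ _ i hi hiN
  have hmono : ∀ m n, m ≤ n → n ≤ N → x m ≤ x n := by
    intro m n hmn
    induction n, hmn using Nat.le_induction with
    | base => exact fun _ => le_rfl
    | succ n _ ih => exact fun hn => (ih (by omega)).trans (hxmono n (by omega)).le
  have hmem : ∀ n ≤ N, x n ∈ Set.Icc (x 0) (x N) :=
    fun n hn => ⟨hmono 0 n (Nat.zero_le n) hn, hmono n N hn le_rfl⟩
  have hab : x 0 < x N := (hxmono 0 (by omega)).trans_le (hmono 1 N (by omega) le_rfl)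
  have hh : 0 < x i - x (i - 1) := by
    have := hxmono (i - 1) (by omega)
    rw [Nat.sub_add_cancel hi] at this
    linarith
  have hk : 0 < x (i + 1) - x i := sub_pos.mpr (hxmono i (by omega))
  have hM0 : 0 ≤ M₃ := (abs_nonneg _).trans (hM _ (hmem 0 (Nat.zero_le N)))
  have h1 := taylor_two_remainder hab hv hM (hmem i (by omega)) (hmem (i - 1) (by omega))
  have h2 := taylor_two_remainder hab hv hM (hmem i (by omega)) (hmem (i + 1) (by omega))
  rw [abs_sub_comm (x (i - 1)), abs_of_pos hh] at h1
  rw [abs_of_pos hk] at h2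
  unfold alphaC betaC
  generalize iteratedDerivWithin 1 v (Set.Icc (x 0) (x N)) (x i) = p at h1 h2
  generalize iteratedDerivWithin 2 v (Set.Icc (x 0) (x N)) (x i) = q at h1 h2 ⊢
  generalize v (x (i - 1)) = vl at h1 ⊢
  generalize v (x (i + 1)) = vr at h2 ⊢
  generalize v (x i) = vc at h1 h2 ⊢
  have hS : 0 ≤ σ ^ 2 * x i ^ 2 := by positivity
  generalize σ ^ 2 * x i ^ 2 = S at hS ⊢
  obtain ⟨h, hh_eq⟩ : ∃ h, h = x i - x (i - 1) := ⟨_, rfl⟩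
  obtain ⟨k, hk_eq⟩ : ∃ k, k = x (i + 1) - x i := ⟨_, rfl⟩
  have e1 : x (i - 1) - x i = -h := by linarith
  have e2 : x (i + 1) - x (i - 1) = h + k := by linarith
  rw [e1, ← hh_eq] at h1
  rw [← hk_eq] at h2
  rw [e2, ← hh_eq, ← hk_eq]
  rw [← hh_eq] at hh
  rw [← hk_eq] at hk
  -- The error is the weighted sum of the two Taylor remainders.
  have key : S / (h * (h + k)) * vl + S / (k * (h + k)) * vr
        - (S / (h * (h + k)) + S / (k * (h + k))) * vc - S / 2 * q
      = S / (h * (h + k)) * (vl - vc - -h * p - (-h) ^ 2 / 2 * q)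
        + S / (k * (h + k)) * (vr - vc - k * p - k ^ 2 / 2 * q) := by
    field_simp
    ring
  rw [key]
  calc _ ≤ S / (h * (h + k)) * (M₃ / 6 * h ^ 3) + S / (k * (h + k)) * (M₃ / 6 * k ^ 3) := by
        refine (abs_add_le _ _).trans (add_le_add ?_ ?_)
        · rw [abs_mul, abs_of_nonneg (by positivity : 0 ≤ S / (h * (h + k)))]
          gcongr
        · rw [abs_mul, abs_of_nonneg (by positivity : 0 ≤ S / (k * (h + k)))]
          gcongr
    _ = S * M₃ / 6 * ((h ^ 2 + k ^ 2) / (h + k)) := by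
        field_simp
    _ ≤ S * M₃ / 6 * (h + k) := by
        refine mul_le_mul_of_nonneg_left ?_ (by positivity)
        rw [div_le_iff₀ (by positivity)]
        nlinarith [mul_pos hh hk]
end

section
/- (Monotonicity of the policy iteration.) Let b ∈ ℝ^{N+1} and let σ', σ be vectors with entries in {σ̲, σ̄}. Suppose u, w ∈ ℝ^{N+1} satisfy (I − ΔtA(σ'))u = b and (I − ΔtA(σ))w = b (with identity boundary rows, so u_0 = w_0 = b_0 and u_N = w_N = b_N), and suppose that for every interior i the entry σ_i attains the maximum of τ ↦ α_i(τ)u_{i−1} + β_i(τ)u_{i+1} − (α_i(τ)+β_i(τ)+r)u_i over τ ∈ {σ̲, σ̄} (i.e. σ ∈ argsup_{τ} (A(τ)u)_i). Then w_i ≥ u_i for every index 0 ≤ i ≤ N; that is, the iterates of the policy iteration form a nondecreasing sequence. -/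
/-- The `i`-th component of `A(τ)u`:
`(A(τ)u)_i = α_i(τ)u_{i−1} + β_i(τ)u_{i+1} − (α_i(τ)+β_i(τ)+r)u_i`. -/
noncomputable def Fnode (x : ℕ → ℝ) (s r : ℝ) (i : ℕ) (u : ℕ → ℝ) : ℝ :=
  alphaC x s i * u (i - 1) + betaC x s i * u (i + 1)
    - (alphaC x s i + betaC x s i + r) * u i

/-- At a node where `w - u` is minimal and nonpositive, the off-diagonal nonnegativity of
`A(s)` gives `(A(s) u)_i ≤ (A(s) w)_i`. -/
theorem Fnode_le_of_min (x : ℕ → ℝ) (s r : ℝ) (i : ℕ) (u w : ℕ → ℝ) (hr : 0 ≤ r)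
    (hl : x (i - 1) < x i) (hg : x i < x (i + 1))
    (h1 : w i - u i ≤ w (i - 1) - u (i - 1)) (h2 : w i - u i ≤ w (i + 1) - u (i + 1))
    (h0 : w i - u i ≤ 0) : Fnode x s r i u ≤ Fnode x s r i w := by
  have p1 : 0 < x i - x (i - 1) := by linarith
  have p2 : 0 < x (i + 1) - x i := by linarith
  have p3 : 0 < x (i + 1) - x (i - 1) := by linarith
  have ha : 0 ≤ alphaC x s i := by unfold alphaC; positivity
  have hb : 0 ≤ betaC x s i := by unfold betaC; positivity
  unfold Fnode
  nlinarith [mul_le_mul_of_nonneg_left h1 ha, mul_le_mul_of_nonneg_left h2 hb,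
    mul_le_mul_of_nonneg_left h0 hr]

/-- Monotonicity of the policy iteration: if `(I − ΔtA(σ'))u = b`, `(I − ΔtA(σ))w = b`
(with identity boundary rows) and `σ` attains the argsup of `τ ↦ (A(τ)u)_i` over
`τ ∈ {σ̲, σ̄}` at every interior node, then `w ≥ u` componentwise. -/
theorem policy_iteration_monotone
    (N : ℕ) (hN : 2 ≤ N) (x : ℕ → ℝ) (hx0 : x 0 = 0)
    (hxmono : ∀ i < N, x i < x (i + 1))
    (σlo σhi r Δt : ℝ) (hσlo : 0 ≤ σlo) (hσ : σlo < σhi) (hr : 0 ≤ r) (hΔt : 0 < Δt)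
    (σp σ : ℕ → ℝ)
    (hσp : ∀ i, 1 ≤ i → i ≤ N - 1 → σp i ∈ ({σlo, σhi} : Set ℝ))
    (hσm : ∀ i, 1 ≤ i → i ≤ N - 1 → σ i ∈ ({σlo, σhi} : Set ℝ))
    (u w b : ℕ → ℝ)
    (hu0 : u 0 = b 0) (huN : u N = b N) (hw0 : w 0 = b 0) (hwN : w N = b N)
    (hu : ∀ i, 1 ≤ i → i ≤ N - 1 → u i - Δt * Fnode x (σp i) r i u = b i)
    (hw : ∀ i, 1 ≤ i → i ≤ N - 1 → w i - Δt * Fnode x (σ i) r i w = b i)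
    (hargmax : ∀ i, 1 ≤ i → i ≤ N - 1 → ∀ τ ∈ ({σlo, σhi} : Set ℝ),
      Fnode x τ r i u ≤ Fnode x (σ i) r i u) :
    ∀ i ≤ N, u i ≤ w i := by
  obtain ⟨j, hj, hmin⟩ := Finset.exists_min_image (Finset.range (N + 1))
    (fun i => w i - u i) ⟨0, by simp⟩
  have hmin' : ∀ i ≤ N, w j - u j ≤ w i - u i := fun i hi =>
    hmin i (Finset.mem_range.mpr (by omega))
  have hjN : j ≤ N := by have := Finset.mem_range.mp hj; omega
  suffices h : 0 ≤ w j - u j by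
    intro i hi
    linarith [hmin' i hi]
  by_contra! hneg
  have hj0 : j ≠ 0 := by rintro rfl; linarith
  have hjn : j ≠ N := by rintro rfl; linarith
  have hj1 : 1 ≤ j := by omega
  have hj2 : j ≤ N - 1 := by omega
  have hl : x (j - 1) < x j := by
    have := hxmono (j - 1) (by omega)
    rwa [Nat.sub_add_cancel hj1] at this
  have hF := Fnode_le_of_min x (σ j) r j u w hr hl (hxmono j (by omega))
    (hmin' (j - 1) (by omega)) (hmin' (j + 1) (by omega)) hneg.le
  have hA := (hargmax j hj1 hj2 (σp j) (hσp j hj1 hj2)).trans hF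
  linarith [hu j hj1 hj2, hw j hj1 hj2, mul_le_mul_of_nonneg_left hA hΔt.le]
end

section
/- (Uniqueness of the solution of the nonlinear discrete system.) Let b ∈ ℝ^{N+1}. Suppose U, V ∈ ℝ^{N+1} both satisfy the nonlinear discrete equations: U_0 = V_0 = b_0, U_N = V_N = b_N, and for every interior index i, U_i − Δt · max_{σ∈{σ̲,σ̄}} [ α_i(σ)U_{i−1} + β_i(σ)U_{i+1} − (α_i(σ)+β_i(σ)+r)U_i ] = b_i and likewise for V. Then U = V. -/
/-- `A(σ)` has nonnegative off-diagonal entries and row sums `-r ≤ 0`, so it is nonpositive at a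
nonnegative interior maximum of `U - V`. -/
lemma Fnode_le_of_max {x : ℕ → ℝ} {s r : ℝ} {k : ℕ} {U V : ℕ → ℝ} (hr : 0 ≤ r)
    (h1 : x (k - 1) < x k) (h2 : x k < x (k + 1)) (hpos : 0 ≤ U k - V k)
    (hl : U (k - 1) - V (k - 1) ≤ U k - V k) (hrt : U (k + 1) - V (k + 1) ≤ U k - V k) :
    Fnode x s r k U ≤ Fnode x s r k V := by
  have hα : 0 ≤ alphaC x s k :=
    div_nonneg (by positivity) (mul_nonneg (by linarith) (by linarith))
  have hβ : 0 ≤ betaC x s k :=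
    div_nonneg (by positivity) (mul_nonneg (by linarith) (by linarith))
  unfold Fnode
  nlinarith [mul_le_mul_of_nonneg_left hl hα, mul_le_mul_of_nonneg_left hrt hβ,
    mul_nonneg hr hpos]

/-- One half of uniqueness. The right-hand side `b` is eliminated, which makes the hypotheses
symmetric in `U` and `V`. -/
lemma le_of_solutions {N : ℕ} {x : ℕ → ℝ} (hxmono : ∀ i < N, x i < x (i + 1))
    {σlo σhi r Δt : ℝ} (hr : 0 ≤ r) (hΔt : 0 < Δt) {U V : ℕ → ℝ}
    (h0 : U 0 = V 0) (hN : U N = V N)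
    (h : ∀ i, 1 ≤ i → i ≤ N - 1 →
      U i - Δt * max (Fnode x σlo r i U) (Fnode x σhi r i U) =
        V i - Δt * max (Fnode x σlo r i V) (Fnode x σhi r i V)) :
    ∀ i ≤ N, U i ≤ V i := by
  obtain ⟨k, hk, hmax⟩ := Finset.exists_max_image (Finset.range (N + 1))
    (fun i => U i - V i) ⟨0, by simp⟩
  have hkN : k ≤ N := by simpa [Nat.lt_succ_iff] using hk
  have hmax' : ∀ i ≤ N, U i - V i ≤ U k - V k := fun i hi =>
    hmax i (by simpa [Nat.lt_succ_iff] using hi)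
  suffices hle : U k - V k ≤ 0 by
    intro i hi
    linarith [hmax' i hi]
  by_contra! hpos
  have hk0 : k ≠ 0 := by
    rintro rfl
    linarith
  have hkn : k ≠ N := by
    rintro rfl
    linarith
  have h1 : x (k - 1) < x k := by
    have := hxmono (k - 1) (by omega)
    rwa [Nat.sub_add_cancel (by omega)] at this
  have h2 : x k < x (k + 1) := hxmono k (by omega)
  have hF : ∀ s, Fnode x s r k U ≤ Fnode x s r k V := fun s =>
    Fnode_le_of_max hr h1 h2 hpos.le (hmax' _ (by omega)) (hmax' _ (by omega))
  have hM := mul_le_mul_of_nonneg_left (max_le_max (hF σlo) (hF σhi)) hΔt.le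
  linarith [h k (by omega) (by omega)]

/-- Uniqueness of the solution of the nonlinear discrete system: two solutions of
`U_i − Δt·max_{σ∈{σ̲,σ̄}} (A(σ)U)_i = b_i` (with identity boundary rows) coincide. -/
theorem uniqueness_nonlinear_discrete_system
    (N : ℕ) (hN : 2 ≤ N) (x : ℕ → ℝ) (hx0 : x 0 = 0)
    (hxmono : ∀ i < N, x i < x (i + 1))
    (σlo σhi r Δt : ℝ) (hσlo : 0 ≤ σlo) (hσ : σlo < σhi) (hr : 0 ≤ r) (hΔt : 0 < Δt)
    (b U V : ℕ → ℝ)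
    (hU0 : U 0 = b 0) (hUN : U N = b N) (hV0 : V 0 = b 0) (hVN : V N = b N)
    (hU : ∀ i, 1 ≤ i → i ≤ N - 1 →
      U i - Δt * max (Fnode x σlo r i U) (Fnode x σhi r i U) = b i)
    (hV : ∀ i, 1 ≤ i → i ≤ N - 1 →
      V i - Δt * max (Fnode x σlo r i V) (Fnode x σhi r i V) = b i) :
    ∀ i ≤ N, U i = V i := by
  intro i hi
  refine le_antisymm ?_ ?_
  · exact le_of_solutions hxmono hr hΔt (hU0.trans hV0.symm) (hUN.trans hVN.symm)
      (fun j h1 h2 => (hU j h1 h2).trans (hV j h1 h2).symm) i hi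
  · exact le_of_solutions hxmono hr hΔt (hV0.trans hU0.symm) (hVN.trans hUN.symm)
      (fun j h1 h2 => (hV j h1 h2).trans (hU j h1 h2).symm) i hi
end
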